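/- Let D be a non-trivial, non-symmetric 2-(v,k,3) design with 3 dividing r, admitting a flag-transitive, point-primitive automorphism group G that is almost simple with socle X = PSL(2,q), where X acts point-primitively on D with point stabilizer X_α maximal in X. Then X_α is not a dihedral subgroup D_{2(q−1)/gcd(2,q−1)} of order 2(q−1)/gcd(2,q−1); that is, the case v = q(q+1)/2 with X_α the normalizer of a maximal split torus does not occur. -/

import Mathlib

/-!
The group `X ≅ PSL(2,q)` acts on the projective line `Ω`, which has `q + 1` points. A dihedral
point stabilizer of order `2 (q - 1) / gcd(2, q - 1)` fixes a pair of points of `Ω`, so by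
maximality the points of the design are the edges of the complete graph on `Ω`, and
`v = q (q + 1) / 2`. For `q = 5` the dihedral group is a Klein four-group, and is not maximal: it
would be the stabilizer of the pair of fixed points of each of its involutions; being its own
normalizer, it would determine this pair, and so fix both points, although some element of the
stabilizer of a pair swaps its two points.

Whether two edges share a vertex can be expressed in terms of the normal subgroup `X` alone, so this
relation is invariant under `G`. Hence the `2 (q - 1)` edges meeting a given edge `α` form a union
`Γ` of orbits of `G_α`, and flag-transitivity gives `r |B ∩ Γ| = 6 (q - 1)` for each block `B`
through `α`. Write `r = 3s`; then `s ∣ 2 (q - 1)` and `s (k - 1) = v - 1 = (q - 1)(q + 2) / 2`, and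
`k < 3s` by Fisher's inequality.

For odd `q = 2m + 1` these conditions force `s = m` and `k = 2m + 4`, and then `k ∣ v r` forces
`m + 2 ∣ 18`, so `q` is 15 or 33, neither of which is a prime power.

For even `q` they force `s = q - 1`, `k = q / 2 + 2` and `|B ∩ Γ| = 2`; for `q = 4` the number of
blocks is not an integer. For `q ≥ 8` each flag `(α, B)` is fixed by an involution of `X`, which
swaps the two ends of `α`. Hence the edges of `B` form a 2-regular graph, which has `k ≡ 2 [MOD 4]`
vertices. Since `b k = v r`, some block is stabilized by a subgroup of `X` of order 4. Each of its
nontrivial elements fixes exactly one point of `Ω`, which is not a vertex of that block because `k`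
is even; so `4 ∣ k`, a contradiction.
-/

open scoped Pointwise
open Matrix

namespace FT

variable {Pt : Type*}

/-- `IsDesign 𝓑 k lam` says that the family `𝓑` of subsets of the point set `Pt` is the
block set of a `2-(v, k, lam)` design: every block has `k` points and any two distinct
points lie on exactly `lam` common blocks. -/
structure IsDesign (𝓑 : Set (Set Pt)) (k lam : ℕ) : Prop where
  block_card : ∀ B ∈ 𝓑, Nat.card B = k
  pair_count : ∀ x y : Pt, x ≠ y → Nat.card {B : Set Pt | B ∈ 𝓑 ∧ x ∈ B ∧ y ∈ B} = lam

/-- The group `G` acts on the design with point set `Pt` and block set `𝓑` as a group of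
automorphisms. -/
def ActsOn (G : Type*) [Group G] [MulAction G Pt] (𝓑 : Set (Set Pt)) : Prop :=
  ∀ (g : G), ∀ B ∈ 𝓑, g • B ∈ 𝓑

/-- The group `G` is transitive on the flags (incident point-block pairs) of the design. -/
def FlagTransitive (G : Type*) [Group G] [MulAction G Pt] (𝓑 : Set (Set Pt)) : Prop :=
  ∀ B ∈ 𝓑, ∀ C ∈ 𝓑, ∀ x ∈ B, ∀ y ∈ C, ∃ g : G, g • B = C ∧ g • x = y

/-- The action of `G` on `Pt` is primitive: it is transitive and every block of
imprimitivity is trivial. -/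
def PointPrimitive (G : Type*) [Group G] (Pt : Type*) [MulAction G Pt] : Prop :=
  MulAction.IsPretransitive G Pt ∧
    ∀ s : Set Pt, MulAction.IsBlock G s → s.Subsingleton ∨ s = Set.univ

/-- The number of blocks of `𝓑` through the point `x` (the replication number, for a
flag-transitive design). -/
noncomputable def repNum (𝓑 : Set (Set Pt)) (x : Pt) : ℕ :=
  Nat.card {B : Set Pt | B ∈ 𝓑 ∧ x ∈ B}

/-- The projective general linear group `PGL(2,K)`, as the quotient of `GL(2,K)` by its
center. -/
abbrev PGL2 (K : Type*) [Field K] :=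
  GL (Fin 2) K ⧸ Subgroup.center (GL (Fin 2) K)

/-- The projective special linear group `PSL(2,K)`. -/
abbrev PSL2 (K : Type*) [Field K] := Matrix.ProjectiveSpecialLinearGroup (Fin 2) K

end FT

open FT

namespace FT


/-! ### Counting in 2-designs -/

lemma ncard_mul_eq_ncard_mul {A B : Type*} (R : A → B → Prop) {s : Set A} {t : Set B} {m n : ℕ}
    (hs : s.Finite) (ht : t.Finite) (hm : ∀ a ∈ s, {b ∈ t | R a b}.ncard = m)
    (hn : ∀ b ∈ t, {a ∈ s | R a b}.ncard = n) : s.ncard * m = t.ncard * n := by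
  classical
  lift s to Finset A using hs
  lift t to Finset B using ht
  simp only [Finset.mem_coe, ← Finset.coe_filter, Set.ncard_coe_finset] at hm hn ⊢
  exact Finset.card_mul_eq_card_mul R hm hn

/-- The point-block incidence matrix of the set system `𝓑`. -/
noncomputable def incidenceMatrix {Pt : Type*} (𝓑 : Set (Set Pt)) : Matrix Pt 𝓑 ℝ :=
  of fun x B => B.1.indicator 1 x

lemma incidenceMatrix_mul_transpose_apply {Pt : Type*} (𝓑 : Set (Set Pt)) [Fintype 𝓑] (x y : Pt) :
    (incidenceMatrix 𝓑 * (incidenceMatrix 𝓑)ᵀ) x y =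
      {B | B ∈ 𝓑 ∧ x ∈ B ∧ y ∈ B}.ncard := by
  classical
  simp only [incidenceMatrix, Matrix.mul_apply, transpose_apply, of_apply, Set.indicator_apply,
    Pi.one_apply, ← ite_and, mul_ite, mul_one, mul_zero, Finset.sum_boole]
  rw [← Set.ncard_coe_finset, ← Set.ncard_image_of_injective _ Subtype.val_injective]
  congr 2
  ext B
  aesop

namespace IsDesign

variable {Pt : Type*} {𝓑 : Set (Set Pt)} {k lam r : ℕ}

lemma ncard_block (hD : IsDesign 𝓑 k lam) {B : Set Pt} (hB : B ∈ 𝓑) : B.ncard = k :=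
  hD.block_card B hB

lemma ncard_mem_pair (hD : IsDesign 𝓑 k lam) {x y : Pt} (hxy : x ≠ y) :
    {B | B ∈ 𝓑 ∧ x ∈ B ∧ y ∈ B}.ncard = lam :=
  hD.pair_count x y hxy

lemma incidenceMatrix_mul_transpose [Fintype 𝓑] [DecidableEq Pt] (hD : IsDesign 𝓑 k lam)
    (hr : ∀ x, repNum 𝓑 x = r) :
    incidenceMatrix 𝓑 * (incidenceMatrix 𝓑)ᵀ =
      ((r : ℝ) - lam) • (1 : Matrix Pt Pt ℝ) + (lam : ℝ) • vecMulVec 1 (star 1) := by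
  ext x y
  rw [incidenceMatrix_mul_transpose_apply]
  simp only [Matrix.add_apply, Matrix.smul_apply, vecMulVec_apply, star_one, Pi.one_apply,
    smul_eq_mul, mul_one]
  obtain rfl | hxy := eq_or_ne x y
  · have hrep : {B | B ∈ 𝓑 ∧ x ∈ B ∧ x ∈ B}.ncard = r := by
      simp only [and_self]
      exact hr x
    rw [hrep, one_apply_eq]
    ring
  · rw [hD.ncard_mem_pair hxy, one_apply_ne hxy]
    ring

variable [Finite Pt]

lemma repNum_mul_eq_of_ncard_inter (hD : IsDesign 𝓑 k lam) {x : Pt} {Γ : Set Pt} (hx : x ∉ Γ)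
    {m : ℕ} (hm : ∀ B ∈ 𝓑, x ∈ B → (B ∩ Γ).ncard = m) : repNum 𝓑 x * m = lam * Γ.ncard := by
  have hcount : {B | B ∈ 𝓑 ∧ x ∈ B}.ncard * m = Γ.ncard * lam := by
    refine ncard_mul_eq_ncard_mul (fun B y => y ∈ B) (Set.toFinite _) (Set.toFinite _) ?_ ?_
    · rintro B ⟨hB, hxB⟩
      rw [← hm B hB hxB, Set.inter_comm]
      rfl
    · intro y hy
      simpa only [Set.mem_ofPred_eq, and_assoc] using
        hD.ncard_mem_pair (ne_of_mem_of_not_mem hy hx).symm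
  rw [mul_comm lam, ← hcount]
  rfl

lemma repNum_mul_pred (hD : IsDesign 𝓑 k lam) (x : Pt) :
    repNum 𝓑 x * (k - 1) = lam * (Nat.card Pt - 1) := by
  have hcompl : ({x}ᶜ : Set Pt).ncard = Nat.card Pt - 1 := by
    rw [Set.ncard_compl, Set.ncard_singleton]
  rw [← hcompl]
  refine hD.repNum_mul_eq_of_ncard_inter (by simp) fun B hB hxB => ?_
  rw [← Set.sdiff_eq, Set.ncard_sdiff_singleton_of_mem hxB, hD.ncard_block hB]

lemma card_blocks_mul (hD : IsDesign 𝓑 k lam) (hr : ∀ x, repNum 𝓑 x = r) :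
    Nat.card 𝓑 * k = Nat.card Pt * r := by
  rw [Nat.card_coe_set_eq, ← Set.ncard_univ]
  refine ncard_mul_eq_ncard_mul (fun B x => x ∈ B) 𝓑.toFinite Set.finite_univ
    (fun B hB => ?_) fun x _ => hr x
  simpa using hD.ncard_block hB

lemma lt_card (hD : IsDesign 𝓑 k lam) [Nontrivial Pt] (hlam : 1 < lam) : k < Nat.card Pt := by
  obtain ⟨x, y, hxy⟩ := exists_pair_ne Pt
  have hcard : 1 < {B | B ∈ 𝓑 ∧ x ∈ B ∧ y ∈ B}.ncard := by rwa [hD.ncard_mem_pair hxy]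
  obtain ⟨B, ⟨hB, -⟩, C, ⟨hC, -⟩, hBC⟩ := (Set.one_lt_ncard (Set.toFinite _)).1 hcard
  rw [← Set.ncard_univ, ← hD.ncard_block hB]
  refine Set.ncard_lt_ncard (Set.ssubset_univ_iff.2 ?_)
  rintro rfl
  refine hBC ((Set.eq_univ_iff_ncard C).2 ?_).symm
  rw [hD.ncard_block hC, ← hD.ncard_block hB, Set.ncard_univ]

theorem card_le_card_blocks (hD : IsDesign 𝓑 k lam) (hr : ∀ x, repNum 𝓑 x = r) (hlt : lam < r) :
    Nat.card Pt ≤ Nat.card 𝓑 := by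
  classical
  have : Fintype Pt := Fintype.ofFinite _
  have : Fintype 𝓑 := Fintype.ofFinite _
  let N := incidenceMatrix 𝓑
  have hpos : (N * Nᵀ).PosDef := by
    rw [hD.incidenceMatrix_mul_transpose hr]
    exact (PosDef.one.smul (sub_pos.2 (Nat.cast_lt.2 hlt))).add_posSemidef
      ((posSemidef_vecMulVec_self_star 1).smul lam.cast_nonneg)
  calc
    Nat.card Pt = (N * Nᵀ).rank := by rw [rank_of_isUnit _ hpos.isUnit, Nat.card_eq_fintype_card]
    _ ≤ N.rank := rank_mul_le_left _ _
    _ ≤ Nat.card 𝓑 := by rw [Nat.card_eq_fintype_card]; exact N.rank_le_card_width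

lemma lt_repNum_of_one_lt [Nontrivial Pt] (hD : IsDesign 𝓑 k lam)
    (hr : ∀ x, repNum 𝓑 x = r) (hlam : 1 < lam) : lam < r := by
  obtain ⟨x⟩ : Nonempty Pt := inferInstance
  have hv : 1 < Nat.card Pt := Finite.one_lt_card
  have hk := hD.lt_card hlam
  have hcount := hD.repNum_mul_pred x
  rw [hr] at hcount
  by_contra! hle
  have hmul : lam * (k - 1) < lam * (Nat.card Pt - 1) :=
    Nat.mul_lt_mul_of_pos_left (by omega) (by omega)
  exact (hcount ▸ hmul).not_ge (Nat.mul_le_mul_right _ hle)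

lemma blockSize_lt_repNum [Nontrivial Pt] (hD : IsDesign 𝓑 k lam) (hr : ∀ x, repNum 𝓑 x = r)
    (hlam : 1 < lam) (hne : Nat.card 𝓑 ≠ Nat.card Pt) : k < r := by
  have hlt := hD.lt_repNum_of_one_lt hr hlam
  have hcard := (hD.card_le_card_blocks hr hlt).lt_of_ne hne.symm
  by_contra! hle
  have hmul : Nat.card Pt * k < Nat.card 𝓑 * k := Nat.mul_lt_mul_of_pos_right hcard (by omega)
  rw [hD.card_blocks_mul hr] at hmul
  exact hmul.not_ge (Nat.mul_le_mul_left _ hle)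

lemma repNum_mul_ncard_inter {G : Type*} [Group G] [MulAction G Pt] (hD : IsDesign 𝓑 k lam)
    (hflag : FlagTransitive G 𝓑) {x : Pt} {Γ : Set Pt} (hx : x ∉ Γ)
    (hΓ : ∀ g : G, g • x = x → g • Γ = Γ) {B : Set Pt} (hB : B ∈ 𝓑) (hxB : x ∈ B) :
    repNum 𝓑 x * (B ∩ Γ).ncard = lam * Γ.ncard := by
  refine hD.repNum_mul_eq_of_ncard_inter hx fun C hC hxC => ?_
  obtain ⟨g, rfl, hg⟩ := hflag B hB C hC x hxB x hxC
  conv_lhs => rw [← hΓ g hg]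
  rw [← Set.smul_set_inter, Set.ncard_smul_set]

end IsDesign

/-! ### Finite group actions -/

open MulAction

section Actions

variable {X Y : Type*} [Group X] [MulAction X Y]

lemma ncard_modEq_ncard_fixed {p m : ℕ} (hp : p.Prime) {g : X} (hg : g ^ p ^ m = 1) {S : Set Y}
    (hS : S.Finite) (hgS : ∀ y ∈ S, g • y ∈ S) :
    S.ncard ≡ {y ∈ S | g • y = y}.ncard [MOD p] := by
  classical
  have := Fact.mk hp
  have := hS.fintype
  let f : Function.End S := Set.MapsTo.restrict (g • ·) S S hgS
  have hf : f ^ p ^ m = 1 := by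
    funext y
    apply Subtype.ext
    refine (Set.MapsTo.coe_iterate_restrict hgS y _).trans ?_
    rw [smul_iterate, hg]
    exact one_smul X _
  have hfix : Subtype.val '' Function.fixedPoints f = {y ∈ S | g • y = y} := by
    ext y
    simp [f, Function.IsFixedPt, Subtype.ext_iff, Set.MapsTo.restrict, Subtype.map, and_comm]
  have hmod := Equiv.Perm.card_fixedPoints_modEq hf
  rwa [← Nat.card_eq_fintype_card, ← Nat.card_eq_fintype_card, Nat.card_coe_set_eq,
    Nat.card_coe_set_eq, ← Set.ncard_image_of_injective _ Subtype.val_injective, hfix] at hmod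

lemma card_dvd_ncard_of_semiregular {S : Set Y} (hinv : ∀ (g : X), ∀ y ∈ S, g • y ∈ S)
    (hfree : ∀ (g : X), ∀ y ∈ S, g • y = y → g = 1) : Nat.card X ∣ S.ncard := by
  let S' : SubMulAction X Y := ⟨S, fun g _ hy => hinv g _ hy⟩
  have hstab (y : S') : stabilizer X y = ⊥ :=
    (Subgroup.eq_bot_iff_forall _).2 fun g hg => hfree g y y.2 (congrArg Subtype.val hg)
  have hcard := Nat.card_congr (selfEquivOrbitsQuotientProd hstab)
  rw [Nat.card_prod] at hcard
  exact ⟨_, hcard.trans (mul_comm _ _)⟩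

lemma exists_pow_dvd_card_stabilizer {p i j : ℕ} (hp : p.Prime) [Finite X] {S : Set Y}
    (hS : S.Finite) (hinv : ∀ (g : X), ∀ y ∈ S, g • y ∈ S) (hX : p ^ (i + j) ∣ Nat.card X)
    (hnot : ¬ p ^ (i + 1) ∣ S.ncard) : ∃ y ∈ S, p ^ j ∣ Nat.card (stabilizer X y) := by
  let S' : SubMulAction X Y := ⟨S, fun g _ hy => hinv g _ hy⟩
  have : Finite S' := hS
  by_contra! hstab
  have horbit (y : S') : p ^ (i + 1) ∣ Nat.card (orbit X y) := by
    have hmul := Nat.card_congr (orbitProdStabilizerEquivGroup X y)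
    rw [Nat.card_prod, SubMulAction.stabilizer_of_subMul] at hmul
    have hy := hstab y y.2
    have := (nonempty_orbit (M := X) y).to_subtype
    rw [hp.pow_dvd_iff_le_factorization Nat.card_pos.ne'] at hX hy ⊢
    rw [← hmul, Nat.factorization_mul Nat.card_pos.ne' Nat.card_pos.ne', Finsupp.add_apply] at hX
    omega
  refine hnot ?_
  have hsum := Nat.card_congr (selfEquivSigmaOrbits X S')
  have := Fintype.ofFinite (orbitRel.Quotient X S')
  rw [Nat.card_sigma] at hsum
  exact (Finset.dvd_sum fun ω _ => horbit ω.out).trans hsum.symm.dvd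

lemma exists_bijective_mulActionHom {Z : Type*} [MulAction X Z] [IsPretransitive X Y]
    [IsPretransitive X Z] {y : Y} {z : Z}
    (h : stabilizer X y = stabilizer X z) :
    ∃ φ : Y →[X] Z, Function.Bijective φ ∧ φ y = z := by
  have hiff (g g' : X) : g • y = g' • y ↔ g • z = g' • z := by
    rw [← inv_smul_eq_iff, ← inv_smul_eq_iff, smul_smul, smul_smul, ← mem_stabilizer_iff,
      h, mem_stabilizer_iff]
  choose t ht using exists_smul_eq X y
  have hφ (g : X) : t (g • y) • z = g • z := (hiff _ _).1 (ht _)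
  refine ⟨⟨fun y' => t y' • z, fun g y' => ?_⟩, ⟨fun y₁ y₂ h₁₂ => ?_, fun z' => ?_⟩, ?_⟩
  · conv_lhs => rw [← ht y', smul_smul, hφ, mul_smul]
    rfl
  · rw [← ht y₁, ← ht y₂]
    exact (hiff _ _).2 h₁₂
  · obtain ⟨g, rfl⟩ := exists_smul_eq X z z'
    exact ⟨g • y, hφ g⟩
  · exact ((hiff (t y) 1).1 (by rw [ht, one_smul])).trans (one_smul X z)

lemma eq_stabilizer_of_le [IsPretransitive X Y] [Nontrivial Y] {H : Subgroup X}
    (hH : IsCoatom H) {y : Y} (hle : H ≤ stabilizer X y) :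
    H = stabilizer X y := by
  refine ((hH.le_iff_eq fun htop => ?_).1 hle).symm
  obtain ⟨z, hz⟩ := exists_ne y
  obtain ⟨g, rfl⟩ := exists_smul_eq X y z
  exact hz (mem_stabilizer_iff.1 (htop ▸ Subgroup.mem_top g))

lemma normalizer_eq_of_isCoatom [IsSimpleGroup X] {H : Subgroup X} (hH : IsCoatom H) (hne : H ≠ ⊥) :
    Subgroup.normalizer (H : Set X) = H := by
  refine (hH.le_iff_eq fun htop => ?_).1 Subgroup.le_normalizer
  have := Subgroup.normalizer_eq_top_iff.1 htop
  exact (this.eq_bot_or_eq_top).elim hne hH.1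

lemma eq_of_stabilizer_eq [IsPretransitive X Y] {y z : Y}
    (hnorm : Subgroup.normalizer (stabilizer X y : Set X) = stabilizer X y)
    (h : stabilizer X z = stabilizer X y) : z = y := by
  obtain ⟨g, rfl⟩ := exists_smul_eq X y z
  rw [stabilizer_smul_eq_stabilizer_map_conj] at h
  have hg : g ∈ Subgroup.normalizer (stabilizer X y : Set X) := by
    refine Subgroup.mem_normalizer_iff.2 fun x => ?_
    conv_rhs => rw [← h]
    exact (Subgroup.mem_map_iff_mem (MulAut.conj g).injective).symm
  rwa [hnorm] at hg

end Actions

/-! ### The action of `PSL(2, q)` on the projective line -/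

section ProjectiveLine

open LinearAlgebra.Projectivization Projectivization

variable {F : Type*} [Field F]

lemma coe_specialLinearGroup_injective {n R : Type*} [Fintype n] [DecidableEq n] [CommRing R] :
    Function.Injective ((↑) : Matrix.SpecialLinearGroup n R → Matrix n n R) :=
  Subtype.val_injective

lemma eq_of_mulVec_eq {v w : Fin 2 → F} (hvw : LinearIndependent F ![v, w])
    {A B : Matrix (Fin 2) (Fin 2) F} (hv : A *ᵥ v = B *ᵥ v) (hw : A *ᵥ w = B *ᵥ w) : A = B := by
  let b := basisOfLinearIndependentOfCardEqFinrank hvw (by simp)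
  refine Matrix.toLin'.injective (b.ext fun i => ?_)
  fin_cases i
  · simpa [b] using hv
  · simpa [b] using hw

lemma pow_mulVec_eq_pow_smul {ι : Type*} [Fintype ι] [DecidableEq ι] {A : Matrix ι ι F}
    {v : ι → F} {c : F} (h : A *ᵥ v = c • v) (m : ℕ) : (A ^ m) *ᵥ v = c ^ m • v := by
  induction m with
  | zero => simp
  | succ m ih => rw [pow_succ', ← mulVec_mulVec, ih, mulVec_smul, h, smul_smul, pow_succ]

lemma mk_smul_eq_self_iff {M : Matrix.SpecialLinearGroup (Fin 2) F} {P : ℙ F (Fin 2 → F)} :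
    (M : PSL2 F) • P = P ↔ ∃ c : F, (M : Matrix (Fin 2) (Fin 2) F) *ᵥ P.rep = c • P.rep := by
  conv_lhs => rw [← P.mk_rep]
  rw [Matrix.ProjectiveSpecialLinearGroup.smul_proj_mk, smul_mk, mk_eq_mk_iff']
  exact exists_congr fun c => eq_comm

lemma pow_card_sub_one_eq_one_of_smul_eq [Fintype F] {P Q : ℙ F (Fin 2 → F)} (hPQ : P ≠ Q)
    {g : PSL2 F} (hP : g • P = P) (hQ : g • Q = Q) : g ^ (Fintype.card F - 1) = 1 := by
  induction g using QuotientGroup.induction_on with | H M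
  let A : Matrix (Fin 2) (Fin 2) F := M
  have hpow {R : ℙ F (Fin 2 → F)} (hR : (M : PSL2 F) • R = R) :
      (A ^ (Fintype.card F - 1)) *ᵥ R.rep = 1 *ᵥ R.rep := by
    obtain ⟨c, hc⟩ := mk_smul_eq_self_iff.1 hR
    have hc0 : c ≠ 0 := by
      rintro rfl
      refine R.rep_nonzero (eq_zero_of_mulVec_eq_zero (M := A) ?_ (hc.trans (zero_smul F _)))
      rw [M.det_coe]
      exact one_ne_zero
    rw [pow_mulVec_eq_pow_smul hc, FiniteField.pow_card_sub_one_eq_one c hc0, one_smul, one_mulVec]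
  have hM : M ^ (Fintype.card F - 1) = 1 := by
    apply coe_specialLinearGroup_injective
    rw [Matrix.SpecialLinearGroup.coe_pow]
    exact eq_of_mulVec_eq (linearIndependent_pair_iff_ne.2 hPQ) (hpow hP) (hpow hQ)
  rw [← QuotientGroup.mk_pow, hM, QuotientGroup.mk_one]

lemma exists_smul_add_smul_eq_rep {P Q R : ℙ F (Fin 2 → F)} (hPQ : P ≠ Q) (hRP : R ≠ P)
    (hRQ : R ≠ Q) : ∃ x y : F, x ≠ 0 ∧ y ≠ 0 ∧ x • P.rep + y • Q.rep = R.rep := by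
  let b := basisOfLinearIndependentOfCardEqFinrank (linearIndependent_pair_iff_ne.2 hPQ) (by simp)
  have hxy : b.repr R.rep 0 • P.rep + b.repr R.rep 1 • Q.rep = R.rep := by
    simpa [b] using b.sum_repr R.rep
  refine ⟨_, _, fun hx => hRQ ?_, fun hy => hRP ?_, hxy⟩
  · rw [← R.mk_rep, ← Q.mk_rep, mk_eq_mk_iff']
    exact ⟨_, by simpa only [hx, zero_smul, zero_add] using hxy⟩
  · rw [← R.mk_rep, ← P.mk_rep, mk_eq_mk_iff']
    exact ⟨_, by simpa only [hy, zero_smul, add_zero] using hxy⟩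

lemma eq_one_of_smul_eq {P Q R : ℙ F (Fin 2 → F)} (hPQ : P ≠ Q) (hRP : R ≠ P) (hRQ : R ≠ Q)
    {g : PSL2 F} (hP : g • P = P) (hQ : g • Q = Q) (hR : g • R = R) : g = 1 := by
  induction g using QuotientGroup.induction_on with | H M
  obtain ⟨c, hc⟩ := mk_smul_eq_self_iff.1 hP
  obtain ⟨d, hd⟩ := mk_smul_eq_self_iff.1 hQ
  obtain ⟨e, he⟩ := mk_smul_eq_self_iff.1 hR
  have hPQ' := linearIndependent_pair_iff_ne.2 hPQ
  obtain ⟨x, y, hx, hy, hxy⟩ := exists_smul_add_smul_eq_rep hPQ hRP hRQ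
  have hcomb : (x * (c - e)) • P.rep + (y * (d - e)) • Q.rep = 0 := by
    rw [← hxy, mulVec_add, mulVec_smul, mulVec_smul, hc, hd] at he
    calc _ = (x • c • P.rep + y • d • Q.rep) - e • (x • P.rep + y • Q.rep) := by module
      _ = 0 := by rw [he, sub_self]
  obtain ⟨hce, hde⟩ := LinearIndependent.pair_iff.1 hPQ' _ _ hcomb
  obtain rfl : c = e := by simpa [hx, sub_eq_zero] using hce
  obtain rfl : d = c := by simpa [hy, sub_eq_zero] using hde
  have hM : (M : Matrix (Fin 2) (Fin 2) F) = scalar (Fin 2) d :=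
    eq_of_mulVec_eq hPQ' (by simp [hc]) (by simp [hd])
  refine (QuotientGroup.eq_one_iff M).2
    (Matrix.SpecialLinearGroup.mem_center_iff.2 ⟨d, ?_, hM.symm⟩)
  rw [← M.det_coe, hM]
  simp

/-- The special linear map `w ↦ w + det(v, w) v`, which for `v ≠ 0` is a transvection with
axis spanned by `v`. -/
def transvection (v : Fin 2 → F) : Matrix.SpecialLinearGroup (Fin 2) F :=
  ⟨1 + vecMulVec v ![-v 1, v 0], by
    simp [det_fin_two]
    ring⟩

lemma coe_transvection (v : Fin 2 → F) :
    (transvection v : Matrix (Fin 2) (Fin 2) F) = 1 + vecMulVec v ![-v 1, v 0] :=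
  rfl

lemma mul_transvection (M : Matrix.SpecialLinearGroup (Fin 2) F) (v : Fin 2 → F) :
    M * transvection v = transvection ((M : Matrix (Fin 2) (Fin 2) F) *ᵥ v) * M := by
  have hdet := M.det_coe
  rw [det_fin_two] at hdet
  apply coe_specialLinearGroup_injective
  simp only [Matrix.SpecialLinearGroup.coe_mul, coe_transvection, mul_add, add_mul,
    mul_one, one_mul, add_right_inj, mul_vecMulVec, vecMulVec_mul]
  congr 1
  ext i
  fin_cases i <;> simp only [mulVec, vecMul, vec2_dotProduct] <;> simp
  · linear_combination v 1 * hdet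
  · linear_combination (-v 0) * hdet

lemma commute_transvection_smul (c : F) (v : Fin 2 → F) :
    Commute (transvection (c • v)) (transvection v) := by
  apply coe_specialLinearGroup_injective
  simp only [Matrix.SpecialLinearGroup.coe_mul, coe_transvection]
  ext i j
  fin_cases i <;> fin_cases j <;> simp [Matrix.mul_apply] <;> ring

lemma transvection_pow_eq_one (p : ℕ) [Fact p.Prime] [CharP F p] (v : Fin 2 → F) :
    transvection v ^ p = 1 := by
  have hnil : vecMulVec v ![-v 1, v 0] ^ 2 = 0 := by
    rw [sq, vecMulVec_mul_vecMulVec, vec2_dotProduct]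
    simp [mul_comm]
  apply coe_specialLinearGroup_injective
  rw [Matrix.SpecialLinearGroup.coe_pow, coe_transvection,
    add_pow_char_of_commute _ (Commute.one_left _), one_pow,
    pow_eq_zero_of_le (Fact.out : p.Prime).two_le hnil, add_zero]
  rfl

lemma mk_transvection_ne_one {v : Fin 2 → F} (hv : v ≠ 0) : (transvection v : PSL2 F) ≠ 1 := by
  intro h
  obtain ⟨c, -, hc⟩ := Matrix.SpecialLinearGroup.mem_center_iff.1
    ((QuotientGroup.eq_one_iff (transvection v)).1 h)
  have h0 : v 0 = 0 := by simpa [transvection, eq_comm] using congr_fun₂ hc 0 1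
  have h1 : v 1 = 0 := by simpa [transvection, eq_comm] using congr_fun₂ hc 1 0
  exact hv (funext fun i => by fin_cases i <;> assumption)

lemma exists_smul_eq_of_pow_eq_one [Fintype F] {g : PSL2 F}
    (hg : g ^ ((Fintype.card F - 1) / Nat.gcd 2 (Fintype.card F - 1)) = 1) :
    ∃ P : ℙ F (Fin 2 → F), g • P = P := by
  classical
  obtain ⟨M, rfl⟩ := QuotientGroup.mk_surjective g
  let A : Matrix (Fin 2) (Fin 2) F := M
  set q := Fintype.card F
  have hA : A ^ q = A := by
    rw [← QuotientGroup.mk_pow, QuotientGroup.eq_one_iff,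
      Matrix.SpecialLinearGroup.mem_center_iff, Fintype.card_fin] at hg
    obtain ⟨c, hc2, hc⟩ := hg
    have hc0 : c ≠ 0 := by
      rintro rfl
      simp at hc2
    have hcgcd : c ^ Nat.gcd 2 (q - 1) = 1 :=
      pow_gcd_eq_one.2 ⟨hc2, FiniteField.pow_card_sub_one_eq_one c hc0⟩
    have hA1 : A ^ (q - 1) = 1 := by
      rw [← Nat.div_mul_cancel (Nat.gcd_dvd_right 2 (q - 1)), pow_mul,
        ← Matrix.SpecialLinearGroup.coe_pow, ← hc, ← map_pow, hcgcd, map_one]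
    rw [← pow_sub_one_mul Fintype.card_ne_zero, hA1, one_mul]
  have hroot : Polynomial.aeval A.toLin' (Polynomial.X ^ q - Polynomial.X : Polynomial F) = 0 := by
    rw [map_sub, map_pow, Polynomial.aeval_X, ← Matrix.toLin'_pow, hA, sub_self]
  have hsplits : (Polynomial.X ^ q - Polynomial.X : Polynomial F).Splits := by
    simpa only [Nat.card_eq_fintype_card] using Polynomial.splits_X_pow_nat_card_sub_X (K := F)
  obtain ⟨c, hc⟩ := ((hsplits.of_dvd (FiniteField.X_pow_card_sub_X_ne_zero F Fintype.one_lt_card)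
    (minpoly.dvd F _ hroot)).exists_eval_eq_zero
      (minpoly.degree_pos (Algebra.IsIntegral.isIntegral _)).ne')
  obtain ⟨v, hv⟩ := (Module.End.hasEigenvalue_of_isRoot hc).exists_hasEigenvector
  refine ⟨mk F v hv.2, ?_⟩
  rw [Matrix.ProjectiveSpecialLinearGroup.smul_proj_mk, smul_mk, mk_eq_mk_iff']
  exact ⟨c, hv.apply_eq_smul.symm⟩

lemma exists_unipotent (p : ℕ) [Fact p.Prime] [CharP F p] (P : ℙ F (Fin 2 → F)) :
    ∃ u : PSL2 F, u ≠ 1 ∧ u ^ p = 1 ∧ ∀ x : PSL2 F, x • P = P → Commute (x * u * x⁻¹) u := by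
  let T : (Fin 2 → F) → PSL2 F := fun v => (transvection v : PSL2 F)
  refine ⟨T P.rep, mk_transvection_ne_one P.rep_nonzero, ?_, fun x hx => ?_⟩
  · rw [← QuotientGroup.mk_pow, transvection_pow_eq_one, QuotientGroup.mk_one]
  · obtain ⟨M, rfl⟩ := QuotientGroup.mk_surjective x
    obtain ⟨c, hc⟩ := mk_smul_eq_self_iff.1 hx
    have hconj : (M : PSL2 F) * T P.rep * (M : PSL2 F)⁻¹ = T (c • P.rep) := by
      rw [mul_inv_eq_iff_eq_mul, ← hc]
      exact congrArg (QuotientGroup.mk' _) (mul_transvection M P.rep)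
    rw [hconj]
    exact (commute_transvection_smul c P.rep).map (QuotientGroup.mk' _)

end ProjectiveLine

/-- The action of `X` on `Ω` behaves like that of `PSL(2, q)` on the projective line over the
field with `q` elements, of characteristic `p`. These are the only properties of `PSL(2, q)`
that the argument needs, and they transfer along group isomorphisms. -/
structure IsLineAction (X Ω : Type*) [Group X] [MulAction X Ω] (q p : ℕ) : Prop where
  prime : p.Prime
  eq_pow : ∃ f ≠ 0, q = p ^ f
  card : Nat.card Ω = q + 1
  two_transitive : MulAction.IsMultiplyPretransitive X Ω 2
  fix_two : ∀ {a b : Ω} {g : X}, a ≠ b → g • a = a → g • b = b → g ^ (q - 1) = 1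
  fix_three : ∀ {a b c : Ω} {g : X}, a ≠ b → c ≠ a → c ≠ b → g • a = a → g • b = b →
    g • c = c → g = 1
  unipotent : ∀ w : Ω, ∃ u : X, u ≠ 1 ∧ u ^ p = 1 ∧ ∀ x : X, x • w = w → Commute (x * u * x⁻¹) u
  fixed : ∀ g : X, g ^ ((q - 1) / Nat.gcd 2 (q - 1)) = 1 → ∃ w : Ω, g • w = w

open LinearAlgebra.Projectivization in
theorem isLineAction_psl2 (F : Type*) [Field F] [Fintype F] (p : ℕ) [CharP F p] :
    IsLineAction (PSL2 F) (ℙ F (Fin 2 → F)) (Fintype.card F) p := by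
  obtain ⟨f, hp, hf⟩ := FiniteField.card F p
  have := Fact.mk hp
  exact
    { prime := hp
      eq_pow := ⟨f, f.ne_zero, hf⟩
      card := by
        rw [Projectivization.card_of_finrank_two F _ (by simp), Nat.card_eq_fintype_card]
      two_transitive := by
        rw [MulAction.is_two_pretransitive_iff]
        intro a b c d hab hcd
        obtain ⟨M, hM⟩ := MulAction.is_two_pretransitive_iff.1
          (inferInstance : MulAction.IsMultiplyPretransitive
            (Matrix.SpecialLinearGroup (Fin 2) F) (ℙ F (Fin 2 → F)) 2) hab hcd
        exact ⟨M, hM⟩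
      fix_two := fun hab ha hb => pow_card_sub_one_eq_one_of_smul_eq hab ha hb
      fix_three := fun hab hca hcb ha hb hc => eq_one_of_smul_eq hab hca hcb ha hb hc
      unipotent := exists_unipotent p
      fixed := fun _ => exists_smul_eq_of_pow_eq_one }

lemma IsLineAction.of_mulEquiv {X Y Ω : Type*} [Group X] [Group Y] [MulAction X Ω] [MulAction Y Ω]
    {q p : ℕ} (hL : IsLineAction Y Ω q p) (e : X ≃* Y) (he : ∀ (x : X) (w : Ω), x • w = e x • w) :
    IsLineAction X Ω q p where
  prime := hL.prime
  eq_pow := hL.eq_pow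
  card := hL.card
  two_transitive := by
    rw [MulAction.is_two_pretransitive_iff]
    intro a b c d hab hcd
    obtain ⟨y, hy⟩ := MulAction.is_two_pretransitive_iff.1 hL.two_transitive hab hcd
    exact ⟨e.symm y, by simpa only [he, e.apply_symm_apply] using hy⟩
  fix_two hab ha hb := by
    simp only [he] at ha hb
    rw [← map_eq_one_iff e e.injective, map_pow, hL.fix_two hab ha hb]
  fix_three hab hca hcb ha hb hc := by
    simp only [he] at ha hb hc
    rw [← map_eq_one_iff e e.injective, hL.fix_three hab hca hcb ha hb hc]
  unipotent w := by
    obtain ⟨u, hu, hup, hcomm⟩ := hL.unipotent w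
    refine ⟨e.symm u, by simpa using hu, by rw [← map_pow, hup, map_one], fun x hx => ?_⟩
    rw [he] at hx
    simpa using (hcomm (e x) hx).map e.symm
  fixed g hg := by
    simp only [he]
    exact hL.fixed (e g) (by rw [← map_pow, hg, map_one])

/-! ### Pairs of points of the line -/

section Pairs

variable {X Ω : Type*} [Group X] [MulAction X Ω]

lemma eq_of_mem_pair {s : Set.powersetCard Ω 2} {a b c : Ω} (ha : a ∈ s) (hb : b ∈ s)
    (hc : c ∈ s) (hab : a ≠ b) (hca : c ≠ a) : c = b := by
  classical
  have hs : {a, b} = (s : Finset Ω) := by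
    refine Finset.eq_of_subset_of_card_le
      (Finset.insert_subset ha (Finset.singleton_subset_iff.2 hb)) ?_
    rw [Set.powersetCard.card_eq s, Finset.card_pair hab]
  rw [← Set.powersetCard.mem_coe_iff, ← hs, Finset.mem_insert, Finset.mem_singleton] at hc
  exact hc.resolve_left hca

lemma ncard_meeting_pairs [Finite Ω] (s : Set.powersetCard Ω 2) :
    {t : Set.powersetCard Ω 2 | t ≠ s ∧ ∃ w ∈ s, w ∈ t}.ncard = 2 * (Nat.card Ω - 2) := by
  classical
  have := Fintype.ofFinite Ω
  let D : Set (Set.powersetCard Ω 2) := {t | Disjoint (s : Finset Ω) t}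
  have hD : D.ncard = (Nat.card Ω - 2).choose 2 := by
    have hcard : (s : Finset Ω)ᶜ.card = Nat.card Ω - 2 := by
      rw [Finset.card_compl, Set.powersetCard.card_eq, Nat.card_eq_fintype_card]
    rw [← hcard, ← Finset.card_powersetCard, ← Set.ncard_coe_finset,
      ← Set.ncard_image_of_injective _ Subtype.val_injective]
    congr 1
    ext t
    simp [D, Finset.subset_compl_iff_disjoint_left, and_comm]
  have hcompl : {t | t ≠ s ∧ ∃ w ∈ s, w ∈ t} = (insert s D)ᶜ := by
    ext t
    simp [D, Finset.not_disjoint_iff, Set.powersetCard.mem_coe_iff]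
  have hs : s ∉ D := by
    intro h
    have hcard := Set.powersetCard.card_eq s
    simp [disjoint_self.1 h] at hcard
  have hle : 2 ≤ Nat.card Ω := by
    rw [Nat.card_eq_fintype_card, ← Set.powersetCard.card_eq s]
    exact Finset.card_le_univ _
  obtain ⟨m, hm⟩ := Nat.exists_eq_add_of_le' hle
  rw [hcompl, Set.ncard_compl, Set.ncard_insert_of_notMem hs, hD, Set.powersetCard.card, hm]
  simp only [Nat.choose_succ_succ', Nat.choose_zero_right, zero_add, Nat.choose_one_right,
    add_tsub_cancel_right, Nat.reduceAdd]
  omega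

variable [DecidableEq Ω]

lemma smul_mem_of_mem_pair {s : Set.powersetCard Ω 2} {g : X} {a : Ω} (hs : g • s = s)
    (ha : a ∈ s) : g • a ∈ s := by
  rw [← Set.powersetCard.mem_coe_iff, ← hs, Set.powersetCard.coe_smul]
  exact Finset.smul_mem_smul_finset ha

lemma smul_eq_of_mem_pair {s : Set.powersetCard Ω 2} {g : X} {a b : Ω} (hs : g • s = s)
    (ha : a ∈ s) (hga : g • a = a) (hb : b ∈ s) : g • b = b := by
  obtain rfl | hab := eq_or_ne a b
  · exact hga
  · refine eq_of_mem_pair ha hb (smul_mem_of_mem_pair hs hb) hab fun h => hab ?_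
    exact smul_left_cancel g (hga.trans h.symm)

lemma sq_smul_eq_of_mem_pair {s : Set.powersetCard Ω 2} {g : X} {a : Ω} (hs : g • s = s)
    (ha : a ∈ s) : g ^ 2 • a = a := by
  rw [sq, mul_smul]
  obtain hga | hga := eq_or_ne (g • a) a
  · rw [hga, hga]
  · have hgas := smul_mem_of_mem_pair hs ha
    exact eq_of_mem_pair hgas ha (smul_mem_of_mem_pair hs hgas) hga
      ((MulAction.injective g).ne hga)

lemma smul_eq_self_of_forall_mem {s : Set.powersetCard Ω 2} {g : X} (h : ∀ w ∈ s, g • w = w) :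
    g • s = s := by
  rw [Set.powersetCard.eq_iff_subset, Set.powersetCard.coe_smul]
  intro w hw
  obtain ⟨v, hv, rfl⟩ := Finset.mem_smul_finset.1 hw
  rwa [h v hv]

lemma smul_eq_of_coe_eq_fixedBy {s : Set.powersetCard Ω 2} {g h : X}
    (hs : (s : Set Ω) = fixedBy Ω g) (hgh : fixedBy Ω (h * g * h⁻¹) = fixedBy Ω g) : h • s = s := by
  rw [← mem_stabilizer_iff, Set.powersetCard.stabilizer_coe, mem_stabilizer_iff, hs, smul_fixedBy,
    hgh]

lemma exists_smul_ne_of_mem_pair (h2 : IsMultiplyPretransitive X Ω 2) (s : Set.powersetCard Ω 2) :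
    ∃ g : X, g • s = s ∧ ∃ w ∈ s, g • w ≠ w := by
  obtain ⟨a, b, hab, hs⟩ := Finset.card_eq_two.1 (Set.powersetCard.card_eq s)
  obtain ⟨g, hga, hgb⟩ := is_two_pretransitive_iff.1 h2 hab hab.symm
  refine ⟨g, Subtype.ext ?_, a, ?_, hga ▸ hab.symm⟩
  · rw [Set.powersetCard.coe_smul, hs, Finset.smul_finset_insert, Finset.smul_finset_singleton,
      hga, hgb, Finset.pair_comm]
  · rw [← Set.powersetCard.mem_coe_iff, hs]
    exact Finset.mem_insert_self a {b}

end Pairs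

namespace IsLineAction

variable {X Ω : Type*} [Group X] [MulAction X Ω] {q p : ℕ}

lemma finite (hL : IsLineAction X Ω q p) : Finite Ω :=
  Nat.finite_of_card_ne_zero (by rw [hL.card]; exact q.succ_ne_zero)

lemma one_lt (hL : IsLineAction X Ω q p) : 1 < q := by
  obtain ⟨f, hf, rfl⟩ := hL.eq_pow
  exact Nat.one_lt_pow hf hL.prime.one_lt

lemma prime_eq_of_dvd (hL : IsLineAction X Ω q p) {l : ℕ} (hl : l.Prime) (hlq : l ∣ q) : l = p := by
  obtain ⟨f, -, rfl⟩ := hL.eq_pow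
  exact (Nat.prime_dvd_prime_iff_eq hl hL.prime).1 (hl.dvd_of_dvd_pow hlq)

lemma isPretransitive_pairs [DecidableEq Ω] (hL : IsLineAction X Ω q p) :
    IsPretransitive X (Set.powersetCard Ω 2) :=
  Set.powersetCard.isPretransitive_of_isMultiplyPretransitive X hL.two_transitive

lemma nontrivial_pairs (hL : IsLineAction X Ω q p) : Nontrivial (Set.powersetCard Ω 2) := by
  have := hL.finite
  have := hL.one_lt
  exact Set.powersetCard.nontrivial' two_pos (by rw [hL.card]; omega)

lemma eq_stabilizer_pair_of_le [DecidableEq Ω] (hL : IsLineAction X Ω q p) {H : Subgroup X}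
    (hH : IsCoatom H) {s : Set.powersetCard Ω 2} (hle : H ≤ stabilizer X s) :
    H = stabilizer X s := by
  have := hL.nontrivial_pairs
  have := hL.isPretransitive_pairs
  exact eq_stabilizer_of_le hH hle

lemma ncard_fixedBy_le_two (hL : IsLineAction X Ω q p) {g : X} (hg : g ≠ 1) :
    (fixedBy Ω g).ncard ≤ 2 := by
  have := hL.finite
  by_contra! h
  obtain ⟨a, b, c, ha, hb, hc, hab, hac, hbc⟩ := (Set.two_lt_ncard_iff).1 h
  exact hg (hL.fix_three hab hac.symm hbc.symm ha hb hc)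

lemma ncard_fixedBy_eq_two (hL : IsLineAction X Ω q p) {l : ℕ} (hl : l.Prime)
    (hlq : l ∣ (q - 1) / Nat.gcd 2 (q - 1)) {g : X} (hg : g ≠ 1) (hgl : g ^ l = 1) :
    (fixedBy Ω g).ncard = 2 := by
  have := hL.finite
  have hle := hL.ncard_fixedBy_le_two hg
  have hpos : 0 < (fixedBy Ω g).ncard :=
    (Set.ncard_pos).2 (hL.fixed g (orderOf_dvd_iff_pow_eq_one.1
      ((orderOf_dvd_of_pow_eq_one hgl).trans hlq)))
  have hmod : q + 1 ≡ (fixedBy Ω g).ncard [MOD l] := by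
    rw [← hL.card, ← Set.ncard_univ]
    have h := ncard_modEq_ncard_fixed (m := 1) hl (by rwa [pow_one]) (Set.finite_univ (α := Ω))
      fun y _ => Set.mem_univ (g • y)
    simp only [Set.mem_univ, true_and] at h
    exact h
  have hmod' : q + 1 ≡ 2 [MOD l] := by
    have hdvd : l ∣ q - 1 := hlq.trans (Nat.div_dvd_of_dvd (Nat.gcd_dvd_right 2 (q - 1)))
    have := hL.one_lt
    exact ((Nat.modEq_iff_dvd' (by omega)).2 (by simpa using hdvd)).symm
  refine le_antisymm hle (Nat.le_of_lt_succ ?_)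
  by_contra! hlt
  have hone : (fixedBy Ω g).ncard = 1 := by omega
  rw [hone] at hmod
  have := Nat.le_of_dvd one_pos ((Nat.modEq_iff_dvd' one_le_two).1 (hmod.symm.trans hmod'))
  exact (hl.two_le.trans this).not_gt one_lt_two

lemma exists_pair_eq_fixedBy (hL : IsLineAction X Ω q p) {l : ℕ} (hl : l.Prime)
    (hlq : l ∣ (q - 1) / Nat.gcd 2 (q - 1)) {g : X} (hg : g ≠ 1) (hgl : g ^ l = 1) :
    ∃ s : Set.powersetCard Ω 2, (s : Set Ω) = fixedBy Ω g := by
  have := hL.finite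
  have hcard := hL.ncard_fixedBy_eq_two hl hlq hg hgl
  rw [Set.ncard_eq_toFinset_card] at hcard
  exact ⟨Set.powersetCard.ofCard hcard, Set.Finite.coe_toFinset _⟩

end IsLineAction

/-! ### Maximal dihedral subgroups -/

lemma conj_r_eq_or_eq_inv {n : ℕ} (d : DihedralGroup n) (i : ZMod n) :
    d * DihedralGroup.r i * d⁻¹ = DihedralGroup.r i ∨
      d * DihedralGroup.r i * d⁻¹ = (DihedralGroup.r i)⁻¹ := by
  rcases d with j | j <;> simp

namespace IsLineAction

variable {X Ω : Type*} [Group X] [MulAction X Ω] {q p n : ℕ}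

lemma exists_pair_of_dihedral [DecidableEq Ω] (hL : IsLineAction X Ω q p) (hn : 2 ≤ n)
    (hnq : n ∣ (q - 1) / Nat.gcd 2 (q - 1)) {φ : DihedralGroup n →* X}
    (hφ : Function.Injective φ) :
    ∃ s : Set.powersetCard Ω 2,
      φ.range ≤ stabilizer X s ∧ ∀ w ∈ s, φ (DihedralGroup.r 1) • w = w := by
  set ρ := φ (DihedralGroup.r 1)
  have hρ : orderOf ρ = n := by rw [orderOf_injective φ hφ, DihedralGroup.orderOf_r_one]
  have hprime : n.minFac.Prime := Nat.minFac_prime (by omega)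
  obtain ⟨m, hm⟩ := n.minFac_dvd
  have hσ : orderOf (ρ ^ m) = n.minFac := by
    have hm0 : m ≠ 0 := by
      rintro rfl
      omega
    rw [orderOf_pow_of_dvd hm0 (hρ ▸ Dvd.intro_left _ hm.symm), hρ]
    exact Nat.div_eq_of_eq_mul_left (Nat.pos_of_ne_zero hm0) hm
  obtain ⟨s, hs⟩ := hL.exists_pair_eq_fixedBy hprime (n.minFac_dvd.trans hnq)
    (fun h => hprime.one_lt.ne' (by rw [← hσ, h, orderOf_one])) (hσ ▸ pow_orderOf_eq_one (ρ ^ m))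
  have hstab : φ.range ≤ stabilizer X s := by
    rintro _ ⟨d, rfl⟩
    refine smul_eq_of_coe_eq_fixedBy hs ?_
    rw [← map_pow, DihedralGroup.r_one_pow, ← map_inv, ← map_mul, ← map_mul]
    obtain h | h := conj_r_eq_or_eq_inv d m
    · rw [h]
    · rw [h, map_inv, fixedBy_inv]
  obtain ⟨a, ha⟩ := hL.fixed ρ (orderOf_dvd_iff_pow_eq_one.1 (hρ ▸ hnq))
  have has : a ∈ (s : Set Ω) := by
    rw [hs]
    exact (stabilizer X a).pow_mem ha m
  exact ⟨s, hstab, fun w hw => smul_eq_of_mem_pair (hstab ⟨_, rfl⟩) has ha hw⟩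

lemma not_isCoatom_of_exponent_prime [IsSimpleGroup X] (hL : IsLineAction X Ω q p) {l : ℕ}
    (hl : l.Prime) (hlq : l ∣ (q - 1) / Nat.gcd 2 (q - 1)) {H : Subgroup X} (hne : H ≠ ⊥)
    (hcomm : ∀ g ∈ H, ∀ h ∈ H, Commute g h) (hexp : ∀ h ∈ H, h ^ l = 1) : ¬ IsCoatom H := by
  classical
  intro hH
  have := hL.isPretransitive_pairs
  have hpair {h : X} (hh : h ∈ H) (h1 : h ≠ 1) : ∃ s : Set.powersetCard Ω 2,
      (s : Set Ω) = fixedBy Ω h ∧ H = stabilizer X s := by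
    obtain ⟨s, hs⟩ := hL.exists_pair_eq_fixedBy hl hlq h1 (hexp h hh)
    refine ⟨s, hs, hL.eq_stabilizer_pair_of_le hH fun g hg => smul_eq_of_coe_eq_fixedBy hs ?_⟩
    rw [(hcomm g hg h hh).eq, mul_inv_cancel_right]
  obtain ⟨⟨h, hh⟩, h1⟩ := Subgroup.ne_bot_iff_exists_ne_one.1 hne
  obtain ⟨s, -, hHs⟩ := hpair hh fun h' => h1 (Subtype.ext h')
  have hfix : ∀ g ∈ H, ∀ w ∈ s, g • w = w := by
    intro g hg w hw
    obtain rfl | hg1 := eq_or_ne g 1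
    · exact one_smul X w
    · obtain ⟨t, ht, hHt⟩ := hpair hg hg1
      obtain rfl : t = s :=
        eq_of_stabilizer_eq (hHs ▸ normalizer_eq_of_isCoatom hH hne) (hHt.symm.trans hHs)
      exact ht.le hw
  obtain ⟨g, hgs, w, hw, hgw⟩ := exists_smul_ne_of_mem_pair hL.two_transitive s
  exact hgw (hfix g (hHs ▸ hgs) w hw)

lemma two_lt_of_isCoatom_dihedral [IsSimpleGroup X] (hL : IsLineAction X Ω q p) (hn : 2 ≤ n)
    (hnq : n ∣ (q - 1) / Nat.gcd 2 (q - 1)) {φ : DihedralGroup n →* X}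
    (hφ : Function.Injective φ) (hmax : IsCoatom φ.range) : 2 < n := by
  refine lt_of_le_of_ne hn ?_
  rintro rfl
  have hcomm : ∀ d d' : DihedralGroup 2, Commute d d' := by unfold Commute SemiconjBy; decide
  have hexp : ∀ d : DihedralGroup 2, d ^ 2 = 1 := by decide
  refine hL.not_isCoatom_of_exponent_prime Nat.prime_two hnq ?_ ?_ ?_ hmax
  · rw [Ne, MonoidHom.range_eq_bot_iff]
    rintro rfl
    have hr : DihedralGroup.r 1 = (1 : DihedralGroup 2) := hφ rfl
    exact absurd hr (by decide)
  · rintro _ ⟨d, rfl⟩ _ ⟨d', rfl⟩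
    exact (hcomm d d').map φ
  · rintro _ ⟨d, rfl⟩
    rw [← map_pow, hexp, map_one]

end IsLineAction

section EdgeAction

variable {X Ω Pt : Type*} [Group X] [MulAction X Ω] [DecidableEq Ω] [MulAction X Pt]
  {q p n : ℕ}

/-- An `X`-equivariant identification of `Pt` with the edges of the complete graph on `Ω`, for
which every edge is fixed pointwise by some element of `X` whose square is not `1` (a generator
of a split torus of `PSL(2, q)`). -/
structure IsEdgeMap (E : Pt →[X] Set.powersetCard Ω 2) : Prop where
  bijective : Function.Bijective E
  exists_torus : ∀ β, ∃ x : X, x ^ 2 ≠ 1 ∧ ∀ w ∈ E β, x • w = w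

theorem IsLineAction.exists_isEdgeMap [IsPretransitive X Pt] (hL : IsLineAction X Ω q p)
    (hn : 2 < n) (hnq : n ∣ (q - 1) / Nat.gcd 2 (q - 1)) {α : Pt}
    (hmax : IsCoatom (stabilizer X α)) {φ : DihedralGroup n →* X}
    (hφ : Function.Injective φ) (hrange : φ.range = stabilizer X α) :
    ∃ E : Pt →[X] Set.powersetCard Ω 2, IsEdgeMap E := by
  obtain ⟨s, hs, hfix⟩ := hL.exists_pair_of_dihedral hn.le hnq hφ
  rw [hrange] at hs
  have := hL.isPretransitive_pairs
  obtain ⟨E, hE, hEα⟩ := exists_bijective_mulActionHom (hL.eq_stabilizer_pair_of_le hmax hs)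
  refine ⟨E, hE, fun β => ?_⟩
  obtain ⟨g, rfl⟩ := exists_smul_eq X α β
  set ρ := φ (DihedralGroup.r 1)
  have hρ : ρ ^ 2 ≠ 1 := by
    rw [Ne, ← orderOf_dvd_iff_pow_eq_one, orderOf_injective φ hφ, DihedralGroup.orderOf_r_one]
    exact Nat.not_dvd_of_pos_of_lt two_pos hn
  refine ⟨g * ρ * g⁻¹, ?_, fun w hw => ?_⟩
  · rwa [conj_pow, Ne, conj_eq_one_iff]
  · rw [map_smul, ← Set.powersetCard.mem_coe_iff, Set.powersetCard.coe_smul,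
      Finset.mem_smul_finset] at hw
    obtain ⟨v, hv, rfl⟩ := hw
    simp only [mul_smul, inv_smul_smul]
    rw [hfix v (by rwa [← hEα])]

theorem IsLineAction.exists_isEdgeMap_of_mulEquiv [IsPretransitive X Pt] [IsSimpleGroup X]
    (hL : IsLineAction X Ω q p) (hq : 3 < q) {α : Pt} (hmax : IsCoatom (stabilizer X α))
    (e : stabilizer X α ≃* DihedralGroup ((q - 1) / Nat.gcd 2 (q - 1))) :
    ∃ E : Pt →[X] Set.powersetCard Ω 2, IsEdgeMap E := by
  have hn : 2 ≤ (q - 1) / Nat.gcd 2 (q - 1) := by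
    rw [Nat.le_div_iff_mul_le (Nat.gcd_pos_of_pos_left _ two_pos)]
    obtain h | h := (Nat.dvd_prime Nat.prime_two).1 (Nat.gcd_dvd_left 2 (q - 1))
    · omega
    · have h2 : 2 ∣ q - 1 := h ▸ Nat.gcd_dvd_right 2 (q - 1)
      omega
  let φ := (stabilizer X α).subtype.comp e.symm.toMonoidHom
  have hφ : Function.Injective φ := Subtype.val_injective.comp e.symm.injective
  have hrange : φ.range = stabilizer X α := by
    rw [MonoidHom.range_comp, MonoidHom.range_eq_top.2 e.symm.surjective,
      ← MonoidHom.range_eq_map, Subgroup.range_subtype]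
  exact hL.exists_isEdgeMap (hL.two_lt_of_isCoatom_dihedral hn dvd_rfl hφ (hrange ▸ hmax))
    dvd_rfl hmax hφ hrange

end EdgeAction

/-! ### Edges with a common vertex -/

section Meets

variable {X Pt : Type*} [Group X] [MulAction X Pt]

/-- When `u` fixes a single point of the line and the points of the design are the edges of the
complete graph on the line, `Incident u β` says that the fixed point of `u` is an end of `β`. It is
phrased without reference to the line, so that it is preserved by every group normalizing `X`. -/
def Incident (u : X) (β : Pt) : Prop :=
  ∃ x : X, x • β = β ∧ x ^ 2 ≠ 1 ∧ Commute (x * u * x⁻¹) u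

variable (X) in
/-- For points of the design that are the edges of the complete graph on the projective line in
characteristic `p`, `Meets X p β γ` says that `β` and `γ` have a common vertex. -/
def Meets (p : ℕ) (β γ : Pt) : Prop :=
  ∃ u : X, u ≠ 1 ∧ u ^ p = 1 ∧ Incident u β ∧ Incident u γ

lemma conjNormal_smul_smul {G : Type*} [Group G] [MulAction G Pt] {X : Subgroup G} [X.Normal]
    (g : G) (x : X) (β : Pt) : MulAut.conjNormal g x • g • β = g • x • β := by
  simp only [Subgroup.smul_def, MulAut.conjNormal_apply, mul_smul, inv_smul_smul]

lemma Incident.conjNormal_smul {G : Type*} [Group G] [MulAction G Pt] {X : Subgroup G} [X.Normal]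
    {u : X} {β : Pt} (h : Incident u β) (g : G) : Incident (MulAut.conjNormal g u) (g • β) := by
  obtain ⟨x, hxβ, hx, hcomm⟩ := h
  refine ⟨MulAut.conjNormal g x, by rw [conjNormal_smul_smul, hxβ], ?_, ?_⟩
  · rwa [← map_pow, Ne, EmbeddingLike.map_eq_one_iff]
  · simpa only [map_mul, map_inv] using hcomm.map (MulAut.conjNormal g : X ≃* X)

lemma Meets.smul {G : Type*} [Group G] [MulAction G Pt] {X : Subgroup G} [X.Normal] {p : ℕ}
    {β γ : Pt} (h : Meets X p β γ) (g : G) : Meets X p (g • β) (g • γ) := by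
  obtain ⟨u, hu, hup, hβ, hγ⟩ := h
  refine ⟨MulAut.conjNormal g u, ?_, ?_, hβ.conjNormal_smul g, hγ.conjNormal_smul g⟩
  · rwa [Ne, EmbeddingLike.map_eq_one_iff]
  · rw [← map_pow, hup, map_one]

end Meets

namespace IsLineAction

variable {X Ω Pt : Type*} [Group X] [MulAction X Ω] [MulAction X Pt] {q p : ℕ}

lemma exists_fixedBy_eq_singleton (hL : IsLineAction X Ω q p) {m : ℕ} {u : X} (hu : u ≠ 1)
    (hup : u ^ p ^ m = 1) : ∃ w : Ω, fixedBy Ω u = {w} := by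
  have := hL.finite
  have hp := hL.prime
  have hq := hL.one_lt
  have hpq : p ∣ q := by
    obtain ⟨f, hf, rfl⟩ := hL.eq_pow
    exact dvd_pow_self p hf
  have hne : (fixedBy Ω u).Nonempty := by
    have hmod := ncard_modEq_ncard_fixed hp hup (Set.finite_univ (α := Ω))
      fun y _ => Set.mem_univ (u • y)
    simp only [Set.mem_univ, true_and, Set.ncard_univ, hL.card] at hmod
    rw [← Set.ncard_pos, Nat.pos_iff_ne_zero]
    intro h0
    have hdvd : p ∣ q + 1 := Nat.modEq_zero_iff_dvd.1 (hmod.trans (h0 ▸ Nat.ModEq.refl _))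
    exact hp.not_dvd_one ((Nat.dvd_add_right hpq).1 hdvd)
  obtain ⟨w, hw⟩ := hne
  refine ⟨w, Set.eq_singleton_iff_unique_mem.2 ⟨hw, fun w' hw' => ?_⟩⟩
  by_contra hne
  have hcop : Nat.Coprime (p ^ m) (q - 1) := by
    refine Nat.Coprime.pow_left _ (hp.coprime_iff_not_dvd.2 fun hdvd => hp.not_dvd_one ?_)
    have := Nat.dvd_sub hpq hdvd
    rwa [Nat.sub_sub_self hq.le] at this
  refine hu (orderOf_eq_one_iff.1 (Nat.eq_one_of_dvd_coprimes hcop ?_ ?_))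
  · exact orderOf_dvd_of_pow_eq_one hup
  · exact orderOf_dvd_of_pow_eq_one (hL.fix_two hne hw' hw)

variable [DecidableEq Ω] {E : Pt →[X] Set.powersetCard Ω 2}

lemma mem_of_incident (hL : IsLineAction X Ω q p) {u : X} {w : Ω} {β : Pt}
    (hu : fixedBy Ω u = {w}) (h : Incident u β) : w ∈ E β := by
  obtain ⟨x, hxβ, hx, hcomm⟩ := h
  have hxw : x • w = w := by
    have hfixes {v : Ω} : u • v = v ↔ v = w := Set.ext_iff.1 hu v
    have hconj : (x * u * x⁻¹) • w = w := by
      rw [← hfixes, ← mul_smul, ← hcomm.eq, mul_smul, hfixes.2 rfl]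
    rw [mul_smul, mul_smul, ← eq_inv_smul_iff, hfixes] at hconj
    rw [← eq_inv_smul_iff, hconj]
  by_contra hw
  have hxE : x • E β = E β := by rw [← map_smul, hxβ]
  obtain ⟨a, b, hab, hs⟩ := Finset.card_eq_two.1 (Set.powersetCard.card_eq (E β))
  have ha : a ∈ E β := by simp [← Set.powersetCard.mem_coe_iff, hs]
  have hb : b ∈ E β := by simp [← Set.powersetCard.mem_coe_iff, hs]
  refine hx (hL.fix_three hab (ne_of_mem_of_not_mem ha hw).symm (ne_of_mem_of_not_mem hb hw).symm
    (sq_smul_eq_of_mem_pair hxE ha) (sq_smul_eq_of_mem_pair hxE hb) ?_)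
  rw [sq, mul_smul, hxw, hxw]

lemma meets_iff (hL : IsLineAction X Ω q p) (hE : IsEdgeMap E) {β γ : Pt} :
    Meets X p β γ ↔ ∃ w ∈ E β, w ∈ E γ := by
  constructor
  · rintro ⟨u, hu, hup, hβ, hγ⟩
    obtain ⟨w, hw⟩ := hL.exists_fixedBy_eq_singleton (m := 1) hu (by rwa [pow_one])
    exact ⟨w, hL.mem_of_incident hw hβ, hL.mem_of_incident hw hγ⟩
  · rintro ⟨w, hβ, hγ⟩
    obtain ⟨u, hu, hup, hcomm⟩ := hL.unipotent w
    have hinc {δ : Pt} (hδ : w ∈ E δ) : Incident u δ := by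
      obtain ⟨x, hx, hfix⟩ := hE.exists_torus δ
      refine ⟨x, hE.bijective.injective ?_, hx, hcomm x (hfix w hδ)⟩
      rw [map_smul, smul_eq_self_of_forall_mem hfix]
    exact ⟨u, hu, hup, hinc hβ, hinc hγ⟩

lemma ncard_meets (hL : IsLineAction X Ω q p) (hE : IsEdgeMap E) (α : Pt) :
    {β | β ≠ α ∧ Meets X p α β}.ncard = 2 * (q - 1) := by
  have := hL.finite
  have himage : E '' {β | β ≠ α ∧ Meets X p α β} = {t | t ≠ E α ∧ ∃ w ∈ E α, w ∈ t} := by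
    ext t
    obtain ⟨β, rfl⟩ := hE.bijective.surjective t
    simp only [hL.meets_iff hE]
    simp only [Set.mem_image, Set.mem_ofPred_eq, hE.bijective.injective.eq_iff, exists_eq_right,
      hE.bijective.injective.ne_iff]
  rw [← Set.ncard_image_of_injective _ hE.bijective.injective, himage, ncard_meeting_pairs, hL.card]
  omega

lemma card_points (hL : IsLineAction X Ω q p) (hE : IsEdgeMap E) :
    Nat.card Pt = (q + 1).choose 2 := by
  rw [Nat.card_eq_of_bijective E hE.bijective, Set.powersetCard.card, hL.card]

end IsLineAction

/-! ### Blocks as graphs on the line -/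

section Blocks

variable {X Ω Pt : Type*} [Group X] [MulAction X Ω] [MulAction X Pt]

/-- The vertex set of the graph on `Ω` whose edges are the images under `E` of the points in
`C`. -/
def vertices (E : Pt → Set.powersetCard Ω 2) (C : Set Pt) : Set Ω :=
  {w | ∃ β ∈ C, w ∈ E β}

lemma ncard_vertices_mul [Finite Pt] [Finite Ω] {E : Pt → Set.powersetCard Ω 2} {C : Set Pt}
    {d : ℕ} (hdeg : ∀ w ∈ vertices E C, {γ ∈ C | w ∈ E γ}.ncard = d) :
    (vertices E C).ncard * d = C.ncard * 2 := by
  refine ncard_mul_eq_ncard_mul (fun w γ => w ∈ E γ) (Set.toFinite _) (Set.toFinite _) hdeg ?_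
  intro β hβ
  refine Eq.trans ?_ ((Set.ncard_coe_finset _).trans (Set.powersetCard.card_eq (E β)))
  congr 1
  ext w
  exact ⟨fun h => h.2, fun h => ⟨⟨β, hβ, h⟩, h⟩⟩

lemma IsLineAction.pow_dvd_ncard [Finite X] {q p j : ℕ} (hL : IsLineAction X Ω q p) {S : Set Ω}
    {H : Subgroup X} (hS : ∀ g ∈ H, ∀ w ∈ S, g • w ∈ S) (hH : p ^ j ∣ Nat.card H)
    (hp : p ∣ S.ncard) : p ^ j ∣ S.ncard := by
  have := hL.finite
  have := Fact.mk hL.prime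
  obtain ⟨P, hP⟩ := Sylow.exists_subgroup_card_pow_prime p hH
  rw [← hP]
  refine card_dvd_ncard_of_semiregular (fun g w hw => hS g g.1.2 w hw) fun g w hw hgw => ?_
  by_contra hg
  have hgX : (g : X) ≠ 1 := by simpa using hg
  have hgp : (g : X) ^ p ^ j = 1 := by
    rw [← hP, ← Subgroup.coe_pow, ← Subgroup.coe_pow, pow_card_eq_one', Subgroup.coe_one,
      Subgroup.coe_one]
  obtain ⟨w', hw'⟩ := hL.exists_fixedBy_eq_singleton hgX hgp
  have hfix : {y ∈ S | (g : X) • y = y} = {w} := by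
    have hfixes {y : Ω} : (g : X) • y = y ↔ y = w' := Set.ext_iff.1 hw' y
    ext y
    exact ⟨fun h => (hfixes.1 h.2).trans (hfixes.1 hgw).symm, fun h => h ▸ ⟨hw, hgw⟩⟩
  have hmod := ncard_modEq_ncard_fixed hL.prime hgp S.toFinite fun y hy => hS g g.1.2 y hy
  rw [hfix, Set.ncard_singleton] at hmod
  exact hL.prime.not_dvd_one ((hmod.dvd_iff dvd_rfl).1 hp)

lemma ncard_through_add_ncard_through [Finite Pt] {E : Pt → Set.powersetCard Ω 2}
    (hE : Function.Injective E) {C : Set Pt} {β : Pt} (hβ : β ∈ C) {a b : Ω} (ha : a ∈ E β)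
    (hb : b ∈ E β) (hab : a ≠ b) :
    {γ ∈ C | a ∈ E γ}.ncard + {γ ∈ C | b ∈ E γ}.ncard =
      (C ∩ {γ | γ ≠ β ∧ ∃ w ∈ E β, w ∈ E γ}).ncard + 2 := by
  have hinter : {γ ∈ C | a ∈ E γ} ∩ {γ ∈ C | b ∈ E γ} = {β} := by
    ext γ
    refine ⟨fun ⟨⟨_, haγ⟩, _, hbγ⟩ => hE ((Set.powersetCard.eq_iff_subset).2 fun w hw => ?_), ?_⟩
    · obtain rfl | hwa := eq_or_ne w a
      · exact ha
      · rwa [eq_of_mem_pair haγ hbγ hw hab hwa]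
    · rintro rfl
      exact ⟨⟨hβ, ha⟩, hβ, hb⟩
  have hunion : {γ ∈ C | a ∈ E γ} ∪ {γ ∈ C | b ∈ E γ} =
      insert β (C ∩ {γ | γ ≠ β ∧ ∃ w ∈ E β, w ∈ E γ}) := by
    ext γ
    constructor
    · intro h
      obtain rfl | hγ := eq_or_ne γ β
      · exact .inl rfl
      · obtain ⟨hC, h⟩ | ⟨hC, h⟩ := h
        exacts [.inr ⟨hC, hγ, a, ha, h⟩, .inr ⟨hC, hγ, b, hb, h⟩]
    · rintro (rfl | ⟨hC, -, w, hw, h⟩)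
      · exact .inl ⟨hβ, ha⟩
      · obtain rfl | hwa := eq_or_ne w a
        · exact .inl ⟨hC, h⟩
        · exact .inr ⟨hC, eq_of_mem_pair ha hb hw hab hwa ▸ h⟩
  rw [← Set.ncard_union_add_ncard_inter, hinter, hunion, Set.ncard_insert_of_notMem (by simp),
    Set.ncard_singleton]

variable [DecidableEq Ω]

lemma smul_mem_vertices (E : Pt →[X] Set.powersetCard Ω 2) {C : Set Pt} {g : X} (hg : g • C = C)
    {w : Ω} (hw : w ∈ vertices E C) : g • w ∈ vertices E C := by
  obtain ⟨β, hβ, hw⟩ := hw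
  refine ⟨g • β, hg ▸ Set.smul_mem_smul_set hβ, ?_⟩
  rw [map_smul, ← Set.powersetCard.mem_coe_iff, Set.powersetCard.coe_smul]
  exact Finset.smul_mem_smul_finset hw

lemma ncard_through_smul (E : Pt →[X] Set.powersetCard Ω 2) {C : Set Pt} {g : X}
    (hg : g • C = C) (w : Ω) : {γ ∈ C | g • w ∈ E γ}.ncard = {γ ∈ C | w ∈ E γ}.ncard := by
  have hset : {γ ∈ C | g • w ∈ E γ} = g • {γ ∈ C | w ∈ E γ} := by
    ext γ
    rw [Set.mem_smul_set_iff_inv_smul_mem]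
    refine and_congr ?_ ?_
    · rw [← Set.mem_smul_set_iff_inv_smul_mem, hg]
    · rw [map_smul, ← Set.powersetCard.mem_coe_iff, ← Set.powersetCard.mem_coe_iff,
        Set.powersetCard.coe_smul, Finset.mem_inv_smul_finset_iff]
  rw [hset, Set.ncard_smul_set]

lemma IsLineAction.two_mul_ncard_through [Finite Pt] {q : ℕ} (hL : IsLineAction X Ω q 2)
    {E : Pt →[X] Set.powersetCard Ω 2} (hE : Function.Injective E) {C : Set Pt} {β : Pt}
    (hβ : β ∈ C) {t : X} (ht : t ≠ 1) (ht2 : t ^ 2 = 1) (htβ : t • β = β) (htC : t • C = C)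
    {a : Ω} (ha : a ∈ E β) :
    2 * {γ ∈ C | a ∈ E γ}.ncard = (C ∩ {γ | γ ≠ β ∧ ∃ w ∈ E β, w ∈ E γ}).ncard + 2 := by
  obtain ⟨b, hb, hba⟩ := Finset.exists_mem_ne
    (by rw [Set.powersetCard.card_eq (E β)]; exact one_lt_two) a
  have htE : t • E β = E β := by rw [← map_smul, htβ]
  -- `t` fixes only one point of the line, so it swaps the two ends of `E β`.
  have hta : t • a = b := by
    obtain ⟨w, hw⟩ := hL.exists_fixedBy_eq_singleton (m := 1) ht (by rwa [pow_one])
    refine eq_of_mem_pair ha hb (smul_mem_of_mem_pair htE ha) hba.symm fun hfix => hba ?_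
    have hwa : a ∈ fixedBy Ω t := hfix
    have hwb : b ∈ fixedBy Ω t := smul_eq_of_mem_pair htE ha hfix hb
    rw [hw] at hwa hwb
    exact hwb.trans hwa.symm
  rw [← ncard_through_add_ncard_through hE hβ ha hb hba.symm, ← hta, ncard_through_smul E htC,
    two_mul]

end Blocks

section Flags

variable {G Pt : Type*} [Group G] [MulAction G Pt] [Finite Pt] {X : Subgroup G} [X.Normal]
  {𝓑 : Set (Set Pt)}

lemma exists_smul_flag_eq (hacts : ActsOn G 𝓑) (hflag : FlagTransitive G 𝓑) [Finite X] {l : ℕ}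
    (hl : l.Prime) {α : Pt} (hα : l ∣ Nat.card (stabilizer X α)) (hr : ¬ l ∣ repNum 𝓑 α)
    {C : Set Pt} (hC : C ∈ 𝓑) {β : Pt} (hβ : β ∈ C) :
    ∃ t : X, t ≠ 1 ∧ t ^ l = 1 ∧ t • β = β ∧ t • C = C := by
  have := Fact.mk hl
  obtain ⟨⟨t, htα⟩, ht⟩ := exists_prime_orderOf_dvd_card' l hα
  rw [Subgroup.orderOf_mk] at ht
  have htl : t ^ l = 1 := ht ▸ pow_orderOf_eq_one t
  obtain ⟨B, ⟨hB, hαB⟩, htB⟩ : ∃ B ∈ {B | B ∈ 𝓑 ∧ α ∈ B}, t • B = B := by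
    have hmod := ncard_modEq_ncard_fixed (m := 1) hl (by rwa [pow_one])
      (Set.toFinite {B | B ∈ 𝓑 ∧ α ∈ B}) (g := t)
      fun B hB => ⟨hacts t B hB.1, htα ▸ Set.smul_mem_smul_set hB.2⟩
    by_contra! hne
    have hempty : {B ∈ {B | B ∈ 𝓑 ∧ α ∈ B} | t • B = B} = ∅ := by
      ext B
      exact ⟨fun h => hne B h.1 h.2, fun h => h.elim⟩
    rw [hempty, Set.ncard_empty] at hmod
    exact hr (Nat.modEq_zero_iff_dvd.1 hmod)
  obtain ⟨g, rfl, rfl⟩ := hflag B hB C hC α hαB β hβ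
  refine ⟨MulAut.conjNormal g t, ?_, by rw [← map_pow, htl, map_one], ?_, ?_⟩
  · rw [Ne, EmbeddingLike.map_eq_one_iff]
    rintro rfl
    exact hl.one_lt.ne (orderOf_one.symm.trans ht)
  · rw [conjNormal_smul_smul, mem_stabilizer_iff.1 htα]
  · rw [conjNormal_smul_smul, htB]

variable {Ω : Type*} [MulAction X Ω] [DecidableEq Ω] {E : Pt →[X] Set.powersetCard Ω 2}
  {q p k lam : ℕ}

lemma IsLineAction.repNum_mul_ncard_meets (hL : IsLineAction X Ω q p) (hE : IsEdgeMap E)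
    (hD : IsDesign 𝓑 k lam) (hflag : FlagTransitive G 𝓑) {B : Set Pt} (hB : B ∈ 𝓑) {α : Pt}
    (hα : α ∈ B) :
    repNum 𝓑 α * (B ∩ {β | β ≠ α ∧ Meets X p α β}).ncard = lam * (2 * (q - 1)) := by
  rw [← hL.ncard_meets hE α]
  refine hD.repNum_mul_ncard_inter hflag (fun h => h.1 rfl) (fun g hg => ?_) hB hα
  have hle {h : G} (hh : h • α = α) {β : Pt} (hβ : β ≠ α ∧ Meets X p α β) :
      h • β ≠ α ∧ Meets X p α (h • β) := by
    refine ⟨fun heq => hβ.1 (smul_left_cancel h (heq.trans hh.symm)), ?_⟩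
    simpa only [hh] using hβ.2.smul h
  refine Set.Subset.antisymm ?_ fun β hβ => ?_
  · rintro _ ⟨β, hβ, rfl⟩
    exact hle hg hβ
  · exact Set.mem_smul_set_iff_inv_smul_mem.2 (hle (inv_smul_eq_iff.2 hg.symm) hβ)

end Flags

/-! ### Parameters -/

section Parameters

lemma parameters_of_odd {m s k b : ℕ} (hm : 0 < m) (hsk : s * (k - 1) = m * (2 * m + 3))
    (hs : s ∣ 4 * m) (hks : k < 3 * s) (hb : b * k = (2 * m + 1) * (m + 1) * (3 * s)) :
    m = 7 ∨ m = 16 := by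
  obtain ⟨c, rfl⟩ : s ∣ m := by
    have hdvd : s ∣ Nat.gcd (m * 4) (m * (2 * m + 3)) :=
      Nat.dvd_gcd (mul_comm 4 m ▸ hs) (Dvd.intro _ hsk)
    have hcop : Nat.Coprime 4 (2 * m + 3) :=
      Nat.Coprime.pow_left 2 (Nat.coprime_two_left.2 ⟨m + 1, by ring⟩)
    rwa [Nat.gcd_mul_left, hcop.gcd_eq_one, mul_one] at hdvd
  have hs0 : 0 < s := Nat.pos_of_mul_pos_right hm
  have hk : k - 1 = c * (2 * (s * c) + 3) :=
    Nat.eq_of_mul_eq_mul_left hs0 (by rw [hsk]; ring)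
  obtain rfl : c = 1 := by
    refine le_antisymm ?_ (Nat.pos_of_mul_pos_left hm)
    by_contra! hc
    have hk' : 2 * (2 * (s * c) + 3) ≤ k - 1 := hk ▸ Nat.mul_le_mul_right _ hc
    have := Nat.mul_le_mul_left s hc
    omega
  simp only [mul_one, one_mul] at hk hb ⊢
  obtain rfl : k = 2 * s + 4 := by omega
  have hdvd : s + 2 ∣ 18 := by
    have hvr : s + 2 ∣ (2 * s + 1) * (s + 1) * (3 * s) := ⟨b * 2, by rw [← hb]; ring⟩
    -- Modulo `s + 2` the product is `(-3) * (-1) * (-6) = -18`.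
    refine (Nat.dvd_add_right hvr).1 ?_
    zify
    exact ⟨6 * s ^ 2 - 3 * s + 9, by ring⟩
  have := Nat.le_of_dvd (by norm_num) hdvd
  have : s ≤ 16 := by omega
  interval_cases s <;> omega

lemma parameters_of_even {m s k : ℕ} (hm : 0 < m) (hm2 : Even m)
    (hsk : s * (k - 1) = (2 * m - 1) * (m + 1)) (hs : s ∣ 2 * (2 * m - 1)) (hks : k < 3 * s) :
    s = 2 * m - 1 ∧ k = m + 2 := by
  have hodd : Odd (2 * m - 1) := Nat.Even.sub_odd (by omega) (even_two_mul m) odd_one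
  have hsodd : Odd s := Nat.Odd.of_mul_left (n := k - 1) (hsk ▸ hodd.mul hm2.add_one)
  obtain ⟨c, hc⟩ : s ∣ 2 * m - 1 :=
    (Nat.coprime_two_left.2 hsodd).symm.dvd_of_dvd_mul_left hs
  have hk : k - 1 = c * (m + 1) :=
    Nat.eq_of_mul_eq_mul_left hsodd.pos (by rw [hsk, hc]; ring)
  obtain ⟨c, rfl⟩ : Odd c := Nat.Odd.of_mul_right (hc ▸ hodd)
  obtain rfl | hc0 := Nat.eq_zero_or_pos c
  · omega
  · have hk' : 3 * (m + 1) ≤ k - 1 := hk ▸ Nat.mul_le_mul_right _ (by omega)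
    have : s * 3 ≤ s * (2 * c + 1) := Nat.mul_le_mul_left _ (by omega)
    omega

lemma choose_two_of_odd (m : ℕ) : (2 * m + 1).choose 2 = m * (2 * m + 1) := by
  rw [Nat.choose_two_right, Nat.add_sub_cancel]
  exact Nat.div_eq_of_eq_mul_left two_pos (by ring)

end Parameters

namespace IsLineAction

variable {G Ω Pt : Type*} [Group G] [MulAction G Pt] [Finite Pt] [DecidableEq Ω]
  {𝓑 : Set (Set Pt)} {q p s k lam : ℕ}

lemma exists_four_dvd_card_stabilizer {X : Subgroup G} [MulAction X Ω] [Finite X]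
    [IsPretransitive X Pt] {E : Pt →[X] Set.powersetCard Ω 2} {f r : ℕ}
    (hL : IsLineAction X Ω (2 ^ (f + 2)) 2) (hE : IsEdgeMap E)
    (hD : IsDesign 𝓑 (2 ^ (f + 1) + 2) lam) (hr : ∀ x, repNum 𝓑 x = r) (hodd : Odd r)
    (hacts : ActsOn G 𝓑) {α : Pt} (hα : 2 ∣ Nat.card (stabilizer X α)) :
    ∃ B ∈ 𝓑, 4 ∣ Nat.card (stabilizer X B) := by
  have hv : Nat.card Pt = 2 ^ (f + 1) * (2 * 2 ^ (f + 1) + 1) := by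
    rw [hL.card_points hE, pow_succ', choose_two_of_odd]
  have hX : 2 ^ (f + 2) ∣ Nat.card X := by
    rw [← (stabilizer X α).card_mul_index, index_stabilizer_of_transitive, hv, pow_succ']
    exact mul_dvd_mul hα (dvd_mul_right _ _)
  have hb : ¬ 2 ^ (f + 1) ∣ 𝓑.ncard := by
    rintro ⟨c, hc⟩
    have hbk := hD.card_blocks_mul hr
    rw [Nat.card_coe_set_eq, hc, hv, mul_assoc, mul_assoc] at hbk
    have hbk := Nat.eq_of_mul_eq_mul_left (by positivity) hbk
    have heven : Even (c * (2 ^ (f + 1) + 2)) :=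
      ((even_two.pow_of_ne_zero f.succ_ne_zero).add even_two).mul_left c
    exact Nat.not_even_iff_odd.2 ((odd_two_mul_add_one _).mul hodd) (hbk ▸ heven)
  exact exists_pow_dvd_card_stabilizer (j := 2) Nat.prime_two 𝓑.toFinite
    (fun (x : X) B hB => hacts x B hB) hX hb

variable {X : Subgroup G} [X.Normal] [MulAction X Ω] {E : Pt →[X] Set.powersetCard Ω 2}

lemma mul_ncard_meets (hL : IsLineAction X Ω q p) (hE : IsEdgeMap E) (hD : IsDesign 𝓑 k 3)
    (hr : ∀ x, repNum 𝓑 x = 3 * s) (hflag : FlagTransitive G 𝓑) {B : Set Pt} (hB : B ∈ 𝓑)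
    {α : Pt} (hα : α ∈ B) :
    s * (B ∩ {β | β ≠ α ∧ Meets X p α β}).ncard = 2 * (q - 1) := by
  refine Nat.eq_of_mul_eq_mul_left three_pos ?_
  rw [← hL.repNum_mul_ncard_meets hE hD hflag hB hα, hr, mul_assoc]

lemma parameters (hL : IsLineAction X Ω q p) (hE : IsEdgeMap E) (hD : IsDesign 𝓑 k 3)
    [Nontrivial Pt] (hr : ∀ x, repNum 𝓑 x = 3 * s) (hflag : FlagTransitive G 𝓑)
    (hne : Nat.card 𝓑 ≠ Nat.card Pt) :
    s * (k - 1) = (q + 1).choose 2 - 1 ∧ s ∣ 2 * (q - 1) ∧ k < 3 * s ∧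
      Nat.card 𝓑 * k = (q + 1).choose 2 * (3 * s) := by
  have hks := hD.blockSize_lt_repNum hr (by norm_num) hne
  obtain ⟨α⟩ : Nonempty Pt := inferInstance
  rw [← hL.card_points hE]
  refine ⟨Nat.eq_of_mul_eq_mul_left three_pos ?_, ?_, hks, hD.card_blocks_mul hr⟩
  · rw [← hD.repNum_mul_pred α, hr, mul_assoc]
  · obtain ⟨B, hB, hα⟩ : {B | B ∈ 𝓑 ∧ α ∈ B}.Nonempty := by
      refine Set.nonempty_of_ncard_ne_zero ?_
      have : {B | B ∈ 𝓑 ∧ α ∈ B}.ncard = 3 * s := hr α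
      omega
    exact Dvd.intro _ (hL.mul_ncard_meets hE hD hr hflag hB hα)

lemma not_odd (hL : IsLineAction X Ω q p) (hE : IsEdgeMap E) (hD : IsDesign 𝓑 k 3)
    [Nontrivial Pt] (hr : ∀ x, repNum 𝓑 x = 3 * s) (hflag : FlagTransitive G 𝓑)
    (hne : Nat.card 𝓑 ≠ Nat.card Pt) : ¬ Odd q := by
  rintro ⟨m, rfl⟩
  have hm := hL.one_lt
  have hv : (2 * m + 1 + 1).choose 2 = (2 * m + 1) * (m + 1) := by
    rw [Nat.choose_succ_succ', Nat.choose_one_right, choose_two_of_odd]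
    ring
  obtain ⟨hsk, hs, hks, hb⟩ := hL.parameters hE hD hr hflag hne
  rw [hv] at hsk hb
  have hm := parameters_of_odd (m := m) (by omega) (by rw [hsk]; lia)
    (by convert hs using 1; omega) hks hb
  have h3 := hL.prime_eq_of_dvd Nat.prime_three (by omega)
  obtain rfl | rfl := hm
  · exact absurd (h3.trans (hL.prime_eq_of_dvd Nat.prime_five (by norm_num)).symm) (by norm_num)
  · exact absurd (h3.trans (hL.prime_eq_of_dvd Nat.prime_eleven (by norm_num)).symm) (by norm_num)

lemma ncard_vertices_block [Finite X] (hL : IsLineAction X Ω q 2) (hE : IsEdgeMap E)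
    (hacts : ActsOn G 𝓑) (hflag : FlagTransitive G 𝓑) {α : Pt}
    (hα : 2 ∣ Nat.card (stabilizer X α)) (hr : ¬ 2 ∣ repNum 𝓑 α) {B : Set Pt} (hB : B ∈ 𝓑)
    (hmeets : ∀ β ∈ B, (B ∩ {γ | γ ≠ β ∧ Meets X 2 β γ}).ncard = 2) :
    (vertices E B).ncard = B.ncard := by
  have := hL.finite
  refine Nat.eq_of_mul_eq_mul_right two_pos (ncard_vertices_mul fun w ⟨β, hβ, hw⟩ => ?_)
  obtain ⟨t, ht, ht2, htβ, htB⟩ := exists_smul_flag_eq hacts hflag Nat.prime_two hα hr hB hβ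
  have hdeg := hL.two_mul_ncard_through hE.bijective.injective hβ ht ht2 htβ htB hw
  simp only [← hL.meets_iff hE, hmeets β hβ] at hdeg
  omega

lemma parameters_of_even_order (hL : IsLineAction X Ω q 2) (hE : IsEdgeMap E)
    (hD : IsDesign 𝓑 k 3) [Nontrivial Pt] (hr : ∀ x, repNum 𝓑 x = 3 * s)
    (hflag : FlagTransitive G 𝓑) (hne : Nat.card 𝓑 ≠ Nat.card Pt) (hq : 2 < q) :
    ∃ f ≠ 0, q = 2 ^ (f + 2) ∧ s = q - 1 ∧ k = 2 ^ (f + 1) + 2 := by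
  obtain ⟨f, rfl⟩ : ∃ f, q = 2 ^ (f + 2) := by
    obtain ⟨n, -, hn⟩ := hL.eq_pow
    match n with
    | 0 | 1 => omega
    | f + 2 => exact ⟨f, hn⟩
  obtain ⟨hsk, hs, hks, hb⟩ := hL.parameters hE hD hr hflag hne
  rw [pow_succ'] at hsk hs hb ⊢
  rw [choose_two_of_odd] at hsk hb
  have hm : 0 < 2 ^ (f + 1) := by positivity
  have hpred : 2 ^ (f + 1) * (2 * 2 ^ (f + 1) + 1) - 1 =
      (2 * 2 ^ (f + 1) - 1) * (2 ^ (f + 1) + 1) := by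
    obtain ⟨t, ht⟩ := Nat.exists_eq_add_of_lt hm
    rw [ht]
    lia
  obtain ⟨rfl, rfl⟩ := parameters_of_even hm (even_two.pow_of_ne_zero f.succ_ne_zero)
    (hsk.trans hpred) hs hks
  refine ⟨f, ?_, (pow_succ' 2 (f + 1)).symm, rfl, rfl⟩
  rintro rfl
  omega

lemma not_even [IsPretransitive X Pt] [Finite X] (hL : IsLineAction X Ω q p) (hE : IsEdgeMap E)
    (hD : IsDesign 𝓑 k 3) [Nontrivial Pt] (hr : ∀ x, repNum 𝓑 x = 3 * s)
    (hflag : FlagTransitive G 𝓑) (hacts : ActsOn G 𝓑) (hne : Nat.card 𝓑 ≠ Nat.card Pt) {α : Pt}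
    (hα : 2 ∣ Nat.card (stabilizer X α)) (hq : 2 < q) : ¬ Even q := by
  intro heven
  obtain rfl : 2 = p := hL.prime_eq_of_dvd Nat.prime_two heven.two_dvd
  obtain ⟨f, hf, rfl, rfl, rfl⟩ := hL.parameters_of_even_order hE hD hr hflag hne hq
  have hrodd : Odd (3 * (2 ^ (f + 2) - 1)) :=
    Nat.odd_mul.2 ⟨by decide, Nat.Even.sub_odd (by omega) heven odd_one⟩
  obtain ⟨B, hB, hstab⟩ := hL.exists_four_dvd_card_stabilizer hE hD hr hrodd hacts hα
  have hV : (vertices E B).ncard = 2 ^ (f + 1) + 2 := by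
    rw [hL.ncard_vertices_block hE hacts hflag hα ?_ hB ?_, hD.ncard_block hB]
    · rwa [hr, ← even_iff_two_dvd, Nat.not_even_iff_odd]
    · intro β hβ
      refine Nat.eq_of_mul_eq_mul_left (show 0 < 2 ^ (f + 2) - 1 by omega) ?_
      rw [hL.mul_ncard_meets hE hD hr hflag hB hβ, mul_comm]
  have h4 : 2 ^ 2 ∣ (vertices E B).ncard :=
    hL.pow_dvd_ncard (fun g hg w hw => smul_mem_vertices E hg hw) hstab
      (hV ▸ (dvd_pow_self 2 f.succ_ne_zero).add dvd_rfl)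
  have hdvd : 4 ∣ 2 ^ (f + 1) := pow_dvd_pow 2 (show 2 ≤ f + 1 by omega)
  omega

end IsLineAction

end FT

open LinearAlgebra.Projectivization in
theorem stmt_15_general {F : Type*} [Field F] [Fintype F] (hF : 4 ≤ Fintype.card F) {Pt : Type*}
    [Finite Pt] {G : Type*} [Group G] [MulAction G Pt] {𝓑 : Set (Set Pt)} {k r : ℕ}
    (hD : IsDesign 𝓑 k 3) (hne : Nat.card 𝓑 ≠ Nat.card Pt) (hr : ∀ x, repNum 𝓑 x = r)
    (h3r : 3 ∣ r) (hacts : ActsOn G 𝓑) (hflag : FlagTransitive G 𝓑) {X : Subgroup G} [X.Normal]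
    (iso : X ≃* PSL2 F) [MulAction.IsPretransitive X Pt] {α : Pt}
    (hmax : IsCoatom (MulAction.stabilizer X α)) :
    IsEmpty (MulAction.stabilizer X α ≃*
      DihedralGroup ((Fintype.card F - 1) / Nat.gcd 2 (Fintype.card F - 1))) := by
  refine ⟨fun e => ?_⟩
  classical
  obtain ⟨p, _⟩ := CharP.exists F
  have hsimple := Matrix.ProjectiveSpecialLinearGroup.rank_two_simple
    (hF.trans_eq Nat.card_eq_fintype_card.symm)
  have : IsSimpleGroup X := iso.isSimpleGroup
  have : Finite X := Finite.of_equiv _ iso.symm.toEquiv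
  let _ : MulAction X (ℙ F (Fin 2 → F)) := .compHom _ iso.toMonoidHom
  have hL := (isLineAction_psl2 F p).of_mulEquiv iso fun _ _ => rfl
  obtain ⟨s, rfl⟩ := h3r
  obtain ⟨E, hE⟩ := hL.exists_isEdgeMap_of_mulEquiv (by omega) hmax e
  have : Nontrivial Pt := by
    by_contra h
    rw [not_nontrivial_iff_subsingleton] at h
    exact hmax.1 (eq_top_iff.2 fun g _ => Subsingleton.elim _ _)
  have hα : 2 ∣ Nat.card (MulAction.stabilizer X α) := by
    rw [Nat.card_congr e.toEquiv, DihedralGroup.nat_card]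
    exact dvd_mul_right _ _
  obtain heven | hodd := Nat.even_or_odd (Fintype.card F)
  · exact hL.not_even hE hD hr hflag hacts hne hα (by omega) heven
  · exact hL.not_odd hE hD hr hflag hne hodd

/-- In the setting of a non-trivial, non-symmetric flag-transitive,
point-primitive `2-(v,k,3)` design with `3 ∣ r`, almost simple automorphism group `G` with
socle `X ≅ PSL(2,q)` acting point-primitively with maximal point stabilizer `X_α`:
the stabilizer `X_α` is not a dihedral group of order `2(q−1)/gcd(2,q−1)` (the normalizer of
a maximal split torus); that is, the case `v = q(q+1)/2` does not occur.
(Recall `DihedralGroup n` has order `2n`.) -/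
theorem stmt_15
    (q : ℕ) (hq4 : 4 ≤ q)
    (F : Type) [Field F] [Fintype F] (hF : Fintype.card F = q)
    {Pt : Type*} [Fintype Pt] {G : Type*} [Group G] [MulAction G Pt] [FaithfulSMul G Pt]
    -- `D = (Pt, 𝓑)` is a non-trivial, non-symmetric `2-(v,k,3)` design …
    (𝓑 : Set (Set Pt)) (v k : ℕ) (hv : Nat.card Pt = v)
    (hD : IsDesign 𝓑 k 3) (hnt : 2 < k ∧ k < v - 1)
    (hnonsym : Nat.card 𝓑 ≠ v)
    -- … whose replication number `r` is divisible by 3, …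
    (r : ℕ) (hr : ∀ x : Pt, repNum 𝓑 x = r) (h3r : 3 ∣ r)
    -- … admitting the flag-transitive, point-primitive automorphism group `G`, …
    (hacts : ActsOn G 𝓑) (hflag : FlagTransitive G 𝓑)
    (hprim : PointPrimitive G Pt)
    -- … where `G` is almost simple with socle `X ≅ PSL(2,q)` (so `PSL(2,q) ⊴ G ≤ PΓL(2,q)`):
    (X : Subgroup G) (hXnormal : X.Normal)
    (hXiso : Nonempty (X ≃* PSL2 F))
    (hXcent : Subgroup.centralizer (X : Set G) = ⊥)
    -- `X` acts point-primitively on `D`, with maximal point stabilizer `X_α`: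
    (hXprim : PointPrimitive X Pt)
    (α : Pt) (hmax : IsCoatom (MulAction.stabilizer X α))
    :
    IsEmpty ((MulAction.stabilizer X α) ≃*
      DihedralGroup ((q - 1) / Nat.gcd 2 (q - 1))) := by
  subst hF hv
  obtain ⟨iso⟩ := hXiso
  have := hXprim.1
  exact stmt_15_general hq4 hD hnonsym hr h3r hacts hflag iso hmax
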